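/- arXiv:1410.2077 — 5 statements merged into one kernel-verified Lean document; each statement's English description precedes it below -/
import Mathlib

section
/- Let C₀ > 0 and let (y,u) be a classical solution of the regularized thin-film equation with control u on [0,T] × [a,b] such that y(t,x) ≥ C₀ for all (t,x) ∈ [0,T] × [a,b], and assume in addition that the mixed derivative ∂ₜ∂ₓy exists, is continuous on [0,T] × [a,b], and equals ∂ₓ∂ₜy. Set c = λC₀^β + ε. Then for every t ∈ [0,T]: (1/2)∫ₐᵇ (∂ₓy(t,x))² dx + (c/2)∫₀ᵗ∫ₐᵇ (∂ₓ³y(s,x))² dx ds ≤ (1/2)∫ₐᵇ (∂ₓy(0,x))² dx + (1/(2c))∫₀ᵗ∫ₐᵇ u(s,x)² dx ds. -/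
/-!
The estimate is obtained by testing the equation with `-∂ₓ²y`. For fixed time, put
`F = (λ|y|^β + ε) ∂ₓ³y - u`, so that `∂ₓF = -∂ₜy` and `F` vanishes at `a` and `b`. Two integrations
by parts in space, whose boundary terms vanish because `∂ₓy = 0` and `F = 0` at the endpoints, give
`∫ ∂ₓy ∂ₜ∂ₓy = -∫ ∂ₓ²y ∂ₜy = ∫ ∂ₓ²y ∂ₓF = -∫ ∂ₓ³y F`.
Since `y ≥ C₀`, the mobility is at least `c = λ C₀^β + ε`, and Young's inequality
`u p ≤ (c/2) p² + u²/(2c)` absorbs the control term, so the left side is at most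
`-(c/2) ∫ (∂ₓ³y)² + (1/(2c)) ∫ u²` (`spatial_dissipation`).

The left side is the time derivative of the energy; in integrated form this is the fundamental
theorem of calculus in time at each `x` combined with Fubini on the compact rectangle
(`energy_balance`), so integrating the inequality over `[0,t]` gives the claim.
-/

open Set

/-- A classical solution of the regularized thin-film equation
`∂ₜ y = −∂ₓ[(λ|y|^β + ε)·∂ₓ³y] + ∂ₓ u` on `[0,T] × [a,b]`, with the boundary
conditions `∂ₓy = ∂ₓ³y = 0` and `u = 0` at `x = a, b`.  The functions
`yx, yxx, yxxx, yxxxx` are the successive spatial derivatives of `y`, `yt` is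
its time derivative, and `ux` is the spatial derivative of the control `u`;
all of them are continuous on `[0,T] × [a,b]`. -/
structure IsClassicalSolution (a b T lam ε β : ℝ)
    (y yx yxx yxxx yxxxx yt u ux : ℝ → ℝ → ℝ) : Prop where
  cont_y : ContinuousOn (fun p : ℝ × ℝ => y p.1 p.2) (Icc 0 T ×ˢ Icc a b)
  cont_yx : ContinuousOn (fun p : ℝ × ℝ => yx p.1 p.2) (Icc 0 T ×ˢ Icc a b)
  cont_yxx : ContinuousOn (fun p : ℝ × ℝ => yxx p.1 p.2) (Icc 0 T ×ˢ Icc a b)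
  cont_yxxx : ContinuousOn (fun p : ℝ × ℝ => yxxx p.1 p.2) (Icc 0 T ×ˢ Icc a b)
  cont_yxxxx : ContinuousOn (fun p : ℝ × ℝ => yxxxx p.1 p.2) (Icc 0 T ×ˢ Icc a b)
  cont_yt : ContinuousOn (fun p : ℝ × ℝ => yt p.1 p.2) (Icc 0 T ×ˢ Icc a b)
  cont_u : ContinuousOn (fun p : ℝ × ℝ => u p.1 p.2) (Icc 0 T ×ˢ Icc a b)
  cont_ux : ContinuousOn (fun p : ℝ × ℝ => ux p.1 p.2) (Icc 0 T ×ˢ Icc a b)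
  hyx : ∀ t ∈ Icc 0 T, ∀ x ∈ Icc a b, HasDerivAt (fun ξ => y t ξ) (yx t x) x
  hyxx : ∀ t ∈ Icc 0 T, ∀ x ∈ Icc a b, HasDerivAt (fun ξ => yx t ξ) (yxx t x) x
  hyxxx : ∀ t ∈ Icc 0 T, ∀ x ∈ Icc a b, HasDerivAt (fun ξ => yxx t ξ) (yxxx t x) x
  hyxxxx : ∀ t ∈ Icc 0 T, ∀ x ∈ Icc a b, HasDerivAt (fun ξ => yxxx t ξ) (yxxxx t x) x
  hyt : ∀ t ∈ Icc 0 T, ∀ x ∈ Icc a b, HasDerivAt (fun s => y s x) (yt t x) t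
  hux : ∀ t ∈ Icc 0 T, ∀ x ∈ Icc a b, HasDerivAt (fun ξ => u t ξ) (ux t x) x
  pde : ∀ t ∈ Icc 0 T, ∀ x ∈ Icc a b,
    HasDerivAt (fun ξ => (lam * |y t ξ| ^ β + ε) * yxxx t ξ) (ux t x - yt t x) x
  bc_yx_a : ∀ t ∈ Icc 0 T, yx t a = 0
  bc_yx_b : ∀ t ∈ Icc 0 T, yx t b = 0
  bc_yxxx_a : ∀ t ∈ Icc 0 T, yxxx t a = 0
  bc_yxxx_b : ∀ t ∈ Icc 0 T, yxxx t b = 0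
  bc_u_a : ∀ t ∈ Icc 0 T, u t a = 0
  bc_u_b : ∀ t ∈ Icc 0 T, u t b = 0

open MeasureTheory

/-- The spatial integral of a function continuous on a compact rectangle is continuous in time.
The function is extended to the plane by clamping both arguments, which reduces the claim to the
continuity of parametric integrals of globally continuous functions. -/
lemma continuousOn_spatial_integral {a b T : ℝ} (hab : a ≤ b) (hT : 0 ≤ T) {f : ℝ → ℝ → ℝ}
    (hf : ContinuousOn (fun p : ℝ × ℝ => f p.1 p.2) (Icc 0 T ×ˢ Icc a b)) :
    ContinuousOn (fun s => ∫ x in a..b, f s x) (Icc 0 T) := by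
  have hg : Continuous (fun p : ℝ × ℝ => f (max 0 (min T p.1)) (max a (min b p.2))) := by
    refine hf.comp_continuous
      (f := fun p : ℝ × ℝ => (max 0 (min T p.1), max a (min b p.2))) (by fun_prop) ?_
    intro p
    exact ⟨⟨le_max_left _ _, max_le hT (min_le_left _ _)⟩,
      ⟨le_max_left _ _, max_le hab (min_le_left _ _)⟩⟩
  have hc : Continuous (fun s => ∫ x in a..b, f (max 0 (min T s)) (max a (min b x))) :=
    intervalIntegral.continuous_parametric_intervalIntegral_of_continuous'
      (f := fun s x => f (max 0 (min T s)) (max a (min b x))) hg a b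
  refine hc.continuousOn.congr fun s hs => intervalIntegral.integral_congr fun x hx => ?_
  rw [uIcc_of_le hab] at hx
  simp only [min_eq_right hs.2, max_eq_right hs.1, min_eq_right hx.2, max_eq_right hx.1]

lemma continuousOn_slice_space {a b T : ℝ} {f : ℝ → ℝ → ℝ}
    (hf : ContinuousOn (fun p : ℝ × ℝ => f p.1 p.2) (Icc 0 T ×ˢ Icc a b))
    {s : ℝ} (hs : s ∈ Icc 0 T) : ContinuousOn (f s) (Icc a b) :=
  hf.comp (f := fun x : ℝ => (s, x)) (by fun_prop) fun _ hx => ⟨hs, hx⟩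

lemma continuousOn_slice_time {a b T : ℝ} {f : ℝ → ℝ → ℝ}
    (hf : ContinuousOn (fun p : ℝ × ℝ => f p.1 p.2) (Icc 0 T ×ˢ Icc a b))
    {x : ℝ} (hx : x ∈ Icc a b) : ContinuousOn (fun s => f s x) (Icc 0 T) :=
  hf.comp (f := fun s : ℝ => (s, x)) (by fun_prop) fun _ hs => ⟨hs, hx⟩

/-- Energy balance: the change of `(1/2) ∫ v²` over `[0,t]` is `∫₀ᵗ ∫ v ∂ₜv`. -/
lemma energy_balance {a b T : ℝ} (hab : a ≤ b) {v vt : ℝ → ℝ → ℝ}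
    (hv : ContinuousOn (fun p : ℝ × ℝ => v p.1 p.2) (Icc 0 T ×ˢ Icc a b))
    (hvt : ContinuousOn (fun p : ℝ × ℝ => vt p.1 p.2) (Icc 0 T ×ˢ Icc a b))
    (hd : ∀ t ∈ Icc (0 : ℝ) T, ∀ x ∈ Icc a b, HasDerivAt (fun s => v s x) (vt t x) t)
    {t : ℝ} (ht : t ∈ Icc (0 : ℝ) T) :
    (1 / 2) * (∫ x in a..b, (v t x) ^ 2) - (1 / 2) * (∫ x in a..b, (v 0 x) ^ 2)
      = ∫ s in (0 : ℝ)..t, ∫ x in a..b, v s x * vt s x := by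
  have hsub : Icc 0 t ⊆ Icc 0 T := Icc_subset_Icc_right ht.2
  have h0 : (0 : ℝ) ∈ Icc 0 T := ⟨le_rfl, ht.1.trans ht.2⟩
  have hI : ∀ s ∈ Icc (0 : ℝ) T, IntervalIntegrable (fun x => (v s x) ^ 2) volume a b :=
    fun s hs => ((continuousOn_slice_space hv hs).pow 2).intervalIntegrable_of_Icc hab
  have hprod : ContinuousOn (fun p : ℝ × ℝ => v p.1 p.2 * vt p.1 p.2) (Icc 0 T ×ˢ Icc a b) :=
    hv.mul hvt
  have hint : IntegrableOn (Function.uncurry fun s x => v s x * vt s x)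
      (uIoc 0 t ×ˢ uIoc a b) := by
    refine (ContinuousOn.integrableOn_compact (isCompact_Icc.prod isCompact_Icc)
      (hprod.mono (prod_mono hsub Subset.rfl))).mono_set ?_
    rw [uIoc_of_le ht.1, uIoc_of_le hab]
    exact prod_mono Ioc_subset_Icc_self Ioc_subset_Icc_self
  rw [intervalIntegral_intervalIntegral_swap hint, ← mul_sub,
    ← intervalIntegral.integral_sub (hI t ht) (hI 0 h0), ← intervalIntegral.integral_const_mul]
  refine intervalIntegral.integral_congr fun x hx => ?_
  rw [uIcc_of_le hab] at hx
  have key : ∫ s in (0 : ℝ)..t, v s x * vt s x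
      = (1 / 2) * (v t x) ^ 2 - (1 / 2) * (v 0 x) ^ 2 := by
    refine intervalIntegral.integral_eq_sub_of_hasDerivAt
      (f := fun s => (1 / 2) * (v s x) ^ 2) (fun s hs => ?_) ?_
    · rw [uIcc_of_le ht.1] at hs
      refine (((hd s (hsub hs) x hx).pow 2).const_mul (1 / 2 : ℝ)).congr_deriv ?_
      push_cast
      ring
    · exact ((continuousOn_slice_time (f := fun s x => v s x * vt s x) hprod hx).mono
        hsub).intervalIntegrable_of_Icc ht.1
  simp only [key, mul_sub]

/-- The dissipation inequality at a fixed time, for the spatial slices `v = ∂ₓy`, `w = ∂ₓ²y`,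
`p = ∂ₓ³y`, mobility `m ≥ c`, control `u`, `z = ∂ₜy` and `z' = ∂ₓ∂ₜy`. -/
lemma spatial_dissipation {a b c : ℝ} (hab : a ≤ b) (hc : 0 < c)
    {v w p z z' m u u' : ℝ → ℝ}
    (hcw : ContinuousOn w (Icc a b)) (hcp : ContinuousOn p (Icc a b))
    (hcz : ContinuousOn z (Icc a b)) (hcz' : ContinuousOn z' (Icc a b))
    (hcu : ContinuousOn u (Icc a b))
    (hv : ∀ x ∈ Icc a b, HasDerivAt v (w x) x) (hw : ∀ x ∈ Icc a b, HasDerivAt w (p x) x)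
    (hz : ∀ x ∈ Icc a b, HasDerivAt z (z' x) x) (hu : ∀ x ∈ Icc a b, HasDerivAt u (u' x) x)
    (hpde : ∀ x ∈ Icc a b, HasDerivAt (fun ξ => m ξ * p ξ) (u' x - z x) x)
    (hm : ∀ x ∈ Icc a b, c ≤ m x)
    (hva : v a = 0) (hvb : v b = 0) (hpa : p a = 0) (hpb : p b = 0)
    (hua : u a = 0) (hub : u b = 0) :
    ∫ x in a..b, v x * z' x
      ≤ -(c / 2) * (∫ x in a..b, (p x) ^ 2) + (1 / (2 * c)) * (∫ x in a..b, (u x) ^ 2) := by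
  have hF : ∀ x ∈ Icc a b, HasDerivAt (fun ξ => m ξ * p ξ - u ξ) (-z x) x := fun x hx =>
    ((hpde x hx).sub (hu x hx)).congr_deriv (by ring)
  have hcF : ContinuousOn (fun ξ => m ξ * p ξ - u ξ) (Icc a b) :=
    fun x hx => (hF x hx).continuousAt.continuousWithinAt
  have e1 : ∫ x in a..b, v x * z' x = -∫ x in a..b, w x * z x := by
    rw [intervalIntegral.integral_mul_deriv_eq_deriv_mul (u := v) (v := z) (u' := w) (v' := z')
      (by rwa [uIcc_of_le hab]) (by rwa [uIcc_of_le hab])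
      (hcw.intervalIntegrable_of_Icc hab) (hcz'.intervalIntegrable_of_Icc hab), hva, hvb]
    ring
  have e2 : ∫ x in a..b, w x * -z x = -∫ x in a..b, p x * (m x * p x - u x) := by
    rw [intervalIntegral.integral_mul_deriv_eq_deriv_mul (u := w) (u' := p)
      (v := fun ξ => m ξ * p ξ - u ξ) (v' := fun x => -z x)
      (by rwa [uIcc_of_le hab]) (by rwa [uIcc_of_le hab])
      (hcp.intervalIntegrable_of_Icc hab) (hcz.neg.intervalIntegrable_of_Icc hab)]
    simp only [hpa, hpb, hua, hub]
    ring
  have e3 : ∫ x in a..b, v x * z' x = ∫ x in a..b, -(p x * (m x * p x - u x)) := by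
    rw [e1, intervalIntegral.integral_neg, ← e2, ← intervalIntegral.integral_neg]
    simp only [mul_neg]
  have hcp2 : ContinuousOn (fun x => -(c / 2) * p x ^ 2) (Icc a b) := (hcp.pow 2).const_mul _
  have hcu2 : ContinuousOn (fun x => 1 / (2 * c) * u x ^ 2) (Icc a b) := (hcu.pow 2).const_mul _
  rw [e3, ← intervalIntegral.integral_const_mul, ← intervalIntegral.integral_const_mul,
    ← intervalIntegral.integral_add (hcp2.intervalIntegrable_of_Icc hab)
      (hcu2.intervalIntegrable_of_Icc hab)]
  refine intervalIntegral.integral_mono_on hab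
    ((hcp.mul hcF).neg.intervalIntegrable_of_Icc hab)
    ((hcp2.add hcu2).intervalIntegrable_of_Icc hab) ?_
  intro x hx
  -- Young's inequality in the form `(c p - u)² / (2c) ≥ 0`.
  have hY : 0 ≤ (1 / (2 * c)) * (c * p x - u x) ^ 2 := by positivity
  have hY' : (1 / (2 * c)) * (c * p x - u x) ^ 2
      = c / 2 * p x ^ 2 - u x * p x + 1 / (2 * c) * u x ^ 2 := by
    field_simp
    ring
  have hM : c * p x ^ 2 ≤ m x * p x ^ 2 :=
    mul_le_mul_of_nonneg_right (hm x hx) (sq_nonneg _)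
  nlinarith

/-- Lemma 2.2, energy estimate: for a classical solution with `y ≥ C₀ > 0`
(and continuous mixed derivative `∂ₜ∂ₓ y = ∂ₓ∂ₜ y`), with `c = λC₀^β + ε`,
`(1/2)‖∂ₓy(t)‖² + (c/2)∫₀ᵗ‖∂ₓ³y‖² ≤ (1/2)‖∂ₓy(0)‖² + (1/(2c))∫₀ᵗ‖u‖²`. -/
theorem thinFilm_energy_estimate
    (a b T lam ε β C₀ : ℝ) (hab : a < b) (hT : 0 < T) (hlam : 0 < lam)
    (hε : 0 ≤ ε) (hβ : 1 < β) (hC₀ : 0 < C₀)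
    (y yx yxx yxxx yxxxx yt u ux yxt : ℝ → ℝ → ℝ)
    (hsol : IsClassicalSolution a b T lam ε β y yx yxx yxxx yxxxx yt u ux)
    (hlower : ∀ t ∈ Icc (0 : ℝ) T, ∀ x ∈ Icc a b, C₀ ≤ y t x)
    (hyxt : ∀ t ∈ Icc (0 : ℝ) T, ∀ x ∈ Icc a b,
      HasDerivAt (fun s => yx s x) (yxt t x) t)
    (hyxt_cont : ContinuousOn (fun p : ℝ × ℝ => yxt p.1 p.2) (Icc 0 T ×ˢ Icc a b))
    (hmixed : ∀ t ∈ Icc (0 : ℝ) T, ∀ x ∈ Icc a b,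
      HasDerivAt (fun ξ => yt t ξ) (yxt t x) x) :
    ∀ t ∈ Icc (0 : ℝ) T,
      (1 / 2) * (∫ x in a..b, (yx t x) ^ 2)
          + ((lam * C₀ ^ β + ε) / 2) * (∫ s in (0 : ℝ)..t, ∫ x in a..b, (yxxx s x) ^ 2)
        ≤ (1 / 2) * (∫ x in a..b, (yx 0 x) ^ 2)
          + (1 / (2 * (lam * C₀ ^ β + ε))) * (∫ s in (0 : ℝ)..t, ∫ x in a..b, (u s x) ^ 2) := by
  intro t ht
  set c := lam * C₀ ^ β + ε with hcdef
  have hc : 0 < c := add_pos_of_pos_of_nonneg (mul_pos hlam (Real.rpow_pos_of_pos hC₀ β)) hε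
  have hsub : Icc 0 t ⊆ Icc 0 T := Icc_subset_Icc_right ht.2
  have hdiss : ∀ s ∈ Icc 0 t, ∫ x in a..b, yx s x * yxt s x
      ≤ -(c / 2) * (∫ x in a..b, (yxxx s x) ^ 2)
        + (1 / (2 * c)) * (∫ x in a..b, (u s x) ^ 2) := by
    intro s hs'
    have hs := hsub hs'
    refine spatial_dissipation (m := fun x => lam * |y s x| ^ β + ε) hab.le hc
      (continuousOn_slice_space hsol.cont_yxx hs)
      (continuousOn_slice_space hsol.cont_yxxx hs) (continuousOn_slice_space hsol.cont_yt hs)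
      (continuousOn_slice_space hyxt_cont hs) (continuousOn_slice_space hsol.cont_u hs)
      (hsol.hyxx s hs) (hsol.hyxxx s hs) (hmixed s hs) (hsol.hux s hs) (hsol.pde s hs) ?_
      (hsol.bc_yx_a s hs) (hsol.bc_yx_b s hs) (hsol.bc_yxxx_a s hs) (hsol.bc_yxxx_b s hs)
      (hsol.bc_u_a s hs) (hsol.bc_u_b s hs)
    intro x hx
    have hy : C₀ ≤ |y s x| := (hlower s hs x hx).trans (le_abs_self _)
    have hpow : C₀ ^ β ≤ |y s x| ^ β := Real.rpow_le_rpow hC₀.le hy (by linarith)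
    exact add_le_add_left (mul_le_mul_of_nonneg_left hpow hlam.le) ε
  have hII : ∀ f : ℝ → ℝ → ℝ,
      ContinuousOn (fun p : ℝ × ℝ => f p.1 p.2) (Icc 0 T ×ˢ Icc a b) →
      IntervalIntegrable (fun s => ∫ x in a..b, f s x) volume 0 t := fun f hf =>
    ((continuousOn_spatial_integral hab.le hT.le hf).mono hsub).intervalIntegrable_of_Icc ht.1
  have hG := hII (fun s x => yx s x * yxt s x) (hsol.cont_yx.mul hyxt_cont)
  have hP := (hII (fun s x => yxxx s x ^ 2) (hsol.cont_yxxx.pow 2)).const_mul (-(c / 2))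
  have hU := (hII (fun s x => u s x ^ 2) (hsol.cont_u.pow 2)).const_mul (1 / (2 * c))
  have hmono := intervalIntegral.integral_mono_on ht.1 hG (hP.add hU) hdiss
  rw [intervalIntegral.integral_add hP hU, intervalIntegral.integral_const_mul,
    intervalIntegral.integral_const_mul,
    ← energy_balance hab.le hsol.cont_yx hyxt_cont hyxt ht] at hmono
  linarith
end

section
/- Let C₀ > 0 and let (y,u) be a classical solution of the regularized thin-film equation with control u on [0,T] × [a,b] such that y(t,x) ≥ C₀ for all (t,x) ∈ [0,T] × [a,b], and assume in addition that the mixed derivative ∂ₜ∂ₓy exists, is continuous on [0,T] × [a,b], and equals ∂ₓ∂ₜy. Set c = λC₀^β + ε and H = (∫ₐᵇ (∂ₓy(0,x))² dx + (1/c)∫₀ᵀ∫ₐᵇ u(s,x)² dx ds)^{1/2}. Then y is uniformly bounded above in terms of the initial mass and H: for all (t,x) ∈ [0,T] × [a,b], y(t,x) ≤ (b−a)^{−1}·∫ₐᵇ y(0,ξ) dξ + H·(b−a)^{1/2}. -/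
open Set

/-!
The bound combines mass conservation, an energy inequality for `∂ₓy`, and Cauchy–Schwarz.

Write `w = (λ|y|^β + ε) ∂ₓ³y`, so that `∂ₜy = ∂ₓ(u - w)`, where `u - w` vanishes at both endpoints.

* Mass: `∫ ∂ₜy dx = 0` at every time, hence `∫ y(t) = ∫ y(0)`.
* Energy: the identity `∂ₓ[∂ₓy ∂ₜy + ∂ₓ²y (w - u)] = ∂ₓy ∂ₜ∂ₓy + ∂ₓ³y (w - u)` integrates to zero by
  the boundary conditions. As `λ|y|^β + ε ≥ c`, the pointwise inequality
  `2 ∂ₓ³y (u - w) ≤ u² / c` gives `∫ 2 ∂ₓy ∂ₜ∂ₓy dx ≤ c⁻¹ ∫ u² dx`, and integrating in time,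
  `∫ (∂ₓy(t))² ≤ H²`.
* Conclusion: `y(t,x) - y(t,ξ) ≤ H (b - a)^{1/2}` for all `ξ` by Cauchy–Schwarz; averaging over `ξ`
  and using the conservation of mass yields the claim.

Passing from time derivatives to spatial integrals is done by the fundamental theorem of calculus
in `t` followed by Fubini (`integral_sub_eq_integral_integral_deriv`), which avoids differentiating
under the integral sign.
-/

open MeasureTheory

/-- A function continuous on a closed rectangle has interval integrable partial integrals. -/
lemma intervalIntegrable_integral_of_continuousOn {a b T : ℝ} (hab : a ≤ b)
    {F : ℝ → ℝ → ℝ}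
    (hF : ContinuousOn (fun p : ℝ × ℝ => F p.1 p.2) (Icc 0 T ×ˢ Icc a b))
    {r t : ℝ} (hr : 0 ≤ r) (hrt : r ≤ t) (htT : t ≤ T) :
    IntervalIntegrable (fun s => ∫ x in a..b, F s x) volume r t := by
  have hint : IntegrableOn (fun p : ℝ × ℝ => F p.1 p.2) (Ioc r t ×ˢ Ioc a b)
      (volume.prod volume) :=
    (hF.integrableOn_compact (isCompact_Icc.prod isCompact_Icc)).mono_set
      (prod_mono ((Ioc_subset_Ioc hr htT).trans Ioc_subset_Icc_self) Ioc_subset_Icc_self)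
  rw [IntegrableOn, ← Measure.prod_restrict] at hint
  rw [intervalIntegrable_iff_integrableOn_Ioc_of_le hrt]
  simp only [intervalIntegral.integral_of_le hab]
  exact hint.integral_prod_left

lemma continuousOn_slice {a b T : ℝ} {F : ℝ → ℝ → ℝ}
    (hF : ContinuousOn (fun p : ℝ × ℝ => F p.1 p.2) (Icc 0 T ×ˢ Icc a b))
    {t : ℝ} (ht : t ∈ Icc 0 T) : ContinuousOn (F t) (Icc a b) :=
  hF.comp (f := fun x => (t, x)) (by fun_prop) fun _ hx => ⟨ht, hx⟩

/-- The increment of a spatial integral over time is the double integral of the time derivative: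
the fundamental theorem of calculus in `s` combined with Fubini. -/
lemma integral_sub_eq_integral_integral_deriv {a b T : ℝ} (hab : a ≤ b)
    {F F' : ℝ → ℝ → ℝ}
    (hF : ContinuousOn (fun p : ℝ × ℝ => F p.1 p.2) (Icc 0 T ×ˢ Icc a b))
    (hF' : ContinuousOn (fun p : ℝ × ℝ => F' p.1 p.2) (Icc 0 T ×ˢ Icc a b))
    (hd : ∀ t ∈ Icc 0 T, ∀ x ∈ Icc a b, HasDerivAt (fun s => F s x) (F' t x) t)
    {t : ℝ} (ht : t ∈ Icc 0 T) :
    (∫ x in a..b, F t x) - (∫ x in a..b, F 0 x) = ∫ s in (0 : ℝ)..t, ∫ x in a..b, F' s x := by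
  have h0 : (0 : ℝ) ∈ Icc 0 T := ⟨le_rfl, ht.1.trans ht.2⟩
  have hsub : Icc 0 t ⊆ Icc 0 T := Icc_subset_Icc_right ht.2
  rw [intervalIntegral_intervalIntegral_swap, ← intervalIntegral.integral_sub]
  · refine intervalIntegral.integral_congr fun x hx => ?_
    rw [uIcc_of_le hab] at hx
    refine (intervalIntegral.integral_eq_sub_of_hasDerivAt (f := fun s => F s x) ?_ ?_).symm
    · intro s hs
      rw [uIcc_of_le ht.1] at hs
      exact hd s (hsub hs) x hx
    · apply ContinuousOn.intervalIntegrable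
      rw [uIcc_of_le ht.1]
      exact hF'.comp (f := fun s => (s, x)) (by fun_prop) fun s hs => ⟨hsub hs, hx⟩
  · exact (continuousOn_slice hF ht).intervalIntegrable_of_Icc hab
  · exact (continuousOn_slice hF h0).intervalIntegrable_of_Icc hab
  · rw [uIoc_of_le ht.1, uIoc_of_le hab]
    exact (hF'.integrableOn_compact (isCompact_Icc.prod isCompact_Icc)).mono_set
      (prod_mono (Ioc_subset_Icc_self.trans hsub) Ioc_subset_Icc_self)

/-- Cauchy–Schwarz against the constant function `1`. -/
lemma sq_integral_le {a b : ℝ} (hab : a < b) {f : ℝ → ℝ} (hf : ContinuousOn f (Icc a b)) :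
    (∫ x in a..b, f x) ^ 2 ≤ (b - a) * ∫ x in a..b, f x ^ 2 := by
  have hL : 0 < b - a := sub_pos.2 hab
  -- The variance of `f` about its mean `k` is nonnegative.
  set k := (∫ x in a..b, f x) / (b - a) with hk
  have hkI : (∫ x in a..b, f x) = k * (b - a) := by rw [hk]; field_simp
  have i1 : IntervalIntegrable (fun x => f x ^ 2) volume a b :=
    (hf.pow 2).intervalIntegrable_of_Icc hab.le
  have i2 : IntervalIntegrable (fun x => 2 * k * f x) volume a b :=
    (continuousOn_const.mul hf).intervalIntegrable_of_Icc hab.le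
  have h : 0 ≤ ∫ x in a..b, (f x ^ 2 - 2 * k * f x + k ^ 2) :=
    intervalIntegral.integral_nonneg hab.le fun x _ => by nlinarith [sq_nonneg (f x - k)]
  rw [intervalIntegral.integral_add (i1.sub i2) (by simp), intervalIntegral.integral_sub i1 i2,
    intervalIntegral.integral_const_mul, intervalIntegral.integral_const, smul_eq_mul, hkI] at h
  rw [hkI]
  nlinarith [mul_nonneg hL.le h]

/-- The `1/2`-Hölder estimate in one dimension, with `|x - ξ|` bounded by the interval length. -/
lemma sub_le_rpow_mul_rpow {a b : ℝ} (hab : a < b) {f f' : ℝ → ℝ}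
    (hd : ∀ x ∈ Icc a b, HasDerivAt f (f' x) x) (hf' : ContinuousOn f' (Icc a b))
    {K : ℝ} (hK : ∫ x in a..b, f' x ^ 2 ≤ K) {x ξ : ℝ} (hx : x ∈ Icc a b) (hξ : ξ ∈ Icc a b) :
    f x - f ξ ≤ K ^ ((1 : ℝ) / 2) * (b - a) ^ ((1 : ℝ) / 2) := by
  have hsub : uIcc ξ x ⊆ Icc a b := uIcc_subset_Icc hξ hx
  have hftc := intervalIntegral.integral_eq_sub_of_hasDerivAt
    (fun z hz => hd z (hsub hz)) ((hf'.mono hsub).intervalIntegrable)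
  have habs : ContinuousOn (fun z => |f' z|) (Icc a b) := hf'.abs
  have h1 : f x - f ξ ≤ ∫ z in a..b, |f' z| := by
    have h2 := intervalIntegral.abs_integral_mono_interval (μ := volume) (f := fun z => |f' z|)
      (a := ξ) (b := x) (c := a) (d := b)
      (by rw [uIoc_of_le hab.le]; exact Ioc_subset_Ioc (le_min hξ.1 hx.1) (max_le hξ.2 hx.2))
      (.of_forall fun z => abs_nonneg _) (habs.intervalIntegrable_of_Icc hab.le)
    have h3 := intervalIntegral.norm_integral_le_abs_integral_norm (μ := volume) (f := f')
      (a := ξ) (b := x)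
    simp only [Real.norm_eq_abs] at h3
    rw [abs_of_nonneg (intervalIntegral.integral_nonneg hab.le fun z _ => abs_nonneg (f' z))] at h2
    rw [← hftc]
    exact (le_abs_self _).trans (h3.trans h2)
  have hcs := sq_integral_le hab habs
  simp only [sq_abs] at hcs
  have hL : 0 < b - a := sub_pos.2 hab
  have hK0 : 0 ≤ K := (intervalIntegral.integral_nonneg hab.le fun z _ => sq_nonneg (f' z)).trans hK
  rw [← Real.sqrt_eq_rpow, ← Real.sqrt_eq_rpow, ← Real.sqrt_mul hK0]
  refine h1.trans (Real.le_sqrt_of_sq_le (hcs.trans ?_))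
  rw [mul_comm]
  gcongr

section

variable {a b T lam ε β : ℝ} {y yx yxx yxxx yxxxx yt u ux : ℝ → ℝ → ℝ}

lemma IsClassicalSolution.integral_yt_eq_zero (hab : a ≤ b)
    (h : IsClassicalSolution a b T lam ε β y yx yxx yxxx yxxxx yt u ux)
    {t : ℝ} (ht : t ∈ Icc 0 T) : ∫ x in a..b, yt t x = 0 := by
  have := intervalIntegral.integral_eq_sub_of_hasDerivAt (a := a) (b := b)
    (f := fun ξ => u t ξ - (lam * |y t ξ| ^ β + ε) * yxxx t ξ) (f' := yt t)
    (fun x hx => by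
      rw [uIcc_of_le hab] at hx
      simpa using (h.hux t ht x hx).fun_sub (h.pde t ht x hx))
    ((continuousOn_slice h.cont_yt ht).intervalIntegrable_of_Icc hab)
  simpa [h.bc_u_a t ht, h.bc_u_b t ht, h.bc_yxxx_a t ht, h.bc_yxxx_b t ht] using this

lemma IsClassicalSolution.mass_conservation (hab : a ≤ b)
    (h : IsClassicalSolution a b T lam ε β y yx yxx yxxx yxxxx yt u ux)
    {t : ℝ} (ht : t ∈ Icc 0 T) : ∫ x in a..b, y t x = ∫ x in a..b, y 0 x := by
  rw [← sub_eq_zero, integral_sub_eq_integral_integral_deriv hab h.cont_y h.cont_yt h.hyt ht]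
  refine intervalIntegral.integral_zero_ae (.of_forall fun s hs => ?_)
  rw [uIoc_of_le ht.1] at hs
  exact h.integral_yt_eq_zero hab ⟨hs.1.le, hs.2.trans ht.2⟩

/-- The energy inequality at a fixed time: the rate of change of `∫ (∂ₓy)²` is at most `1 / c` times
the squared `L²` norm of `u`. -/
lemma IsClassicalSolution.integral_yx_mul_yxt_le (hab : a ≤ b) (hlam : 0 < lam) (hβ : 1 < β)
    (h : IsClassicalSolution a b T lam ε β y yx yxx yxxx yxxxx yt u ux)
    {yxt : ℝ → ℝ → ℝ}
    (hyxt_cont : ContinuousOn (fun p : ℝ × ℝ => yxt p.1 p.2) (Icc 0 T ×ˢ Icc a b))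
    (hmixed : ∀ t ∈ Icc (0 : ℝ) T, ∀ x ∈ Icc a b,
      HasDerivAt (fun ξ => yt t ξ) (yxt t x) x)
    {C₀ : ℝ} (hC₀ : 0 < C₀) (hc : 0 < lam * C₀ ^ β + ε)
    (hlower : ∀ t ∈ Icc (0 : ℝ) T, ∀ x ∈ Icc a b, C₀ ≤ y t x)
    {t : ℝ} (ht : t ∈ Icc 0 T) :
    ∫ x in a..b, 2 * yx t x * yxt t x ≤
      (1 / (lam * C₀ ^ β + ε)) * ∫ x in a..b, u t x ^ 2 := by
  have cy := continuousOn_slice h.cont_y ht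
  have cyx := continuousOn_slice h.cont_yx ht
  have cyxxx := continuousOn_slice h.cont_yxxx ht
  have cu := continuousOn_slice h.cont_u ht
  have cyxt := continuousOn_slice hyxt_cont ht
  have cw : ContinuousOn (fun x => (lam * |y t x| ^ β + ε) * yxxx t x) (Icc a b) :=
    ((continuousOn_const.mul (cy.abs.rpow_const fun x _ => Or.inr (by linarith))).add
      continuousOn_const).mul cyxxx
  set w : ℝ → ℝ := fun x => (lam * |y t x| ^ β + ε) * yxxx t x with hw
  have cg : ContinuousOn (fun x => yx t x * yxt t x + yxxx t x * (w x - u t x)) (Icc a b) :=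
    (cyx.mul cyxt).add (cyxxx.mul (cw.sub cu))
  have hzero : ∫ x in a..b, (yx t x * yxt t x + yxxx t x * (w x - u t x)) = 0 := by
    have := intervalIntegral.integral_eq_sub_of_hasDerivAt (a := a) (b := b)
      (f := fun x => yx t x * yt t x + yxx t x * (w x - u t x))
      (f' := fun x => yx t x * yxt t x + yxxx t x * (w x - u t x))
      (fun x hx => by
        rw [uIcc_of_le hab] at hx
        refine HasDerivAt.congr_deriv (((h.hyxx t ht x hx).fun_mul (hmixed t ht x hx)).fun_add
          ((h.hyxxx t ht x hx).fun_mul ((h.pde t ht x hx).fun_sub (h.hux t ht x hx)))) ?_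
        simp only [hw]
        ring)
      (cg.intervalIntegrable_of_Icc hab)
    rw [this]
    simp [hw, h.bc_u_a t ht, h.bc_u_b t ht, h.bc_yxxx_a t ht, h.bc_yxxx_b t ht,
      h.bc_yx_a t ht, h.bc_yx_b t ht]
  set c := lam * C₀ ^ β + ε with hcdef
  have i1 : IntervalIntegrable
      (fun x => 2 * (yx t x * yxt t x + yxxx t x * (w x - u t x))) volume a b :=
    (continuousOn_const.mul cg).intervalIntegrable_of_Icc hab
  have i2 : IntervalIntegrable (fun x => 1 / c * u t x ^ 2) volume a b :=
    (continuousOn_const.mul (cu.pow 2)).intervalIntegrable_of_Icc hab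
  calc ∫ x in a..b, 2 * yx t x * yxt t x
      ≤ ∫ x in a..b, (2 * (yx t x * yxt t x + yxxx t x * (w x - u t x)) + 1 / c * u t x ^ 2) := by
        refine intervalIntegral.integral_mono_on hab
          (((continuousOn_const.mul cyx).mul cyxt).intervalIntegrable_of_Icc hab) (i1.add i2)
          fun x hx => ?_
        have hm : c ≤ lam * |y t x| ^ β + ε := by
          rw [hcdef]
          gcongr
          exact (hlower t ht x hx).trans (le_abs_self _)
        have h1 : c * yxxx t x ^ 2 ≤ yxxx t x * w x := by
          simp only [hw]
          nlinarith [mul_le_mul_of_nonneg_right hm (sq_nonneg (yxxx t x))]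
        -- Young's inequality `2 p v ≤ c p² + v² / c`, by completing the square.
        have h2 : 0 ≤ c * yxxx t x ^ 2 - 2 * yxxx t x * u t x + 1 / c * u t x ^ 2 := by
          have : c * yxxx t x ^ 2 - 2 * yxxx t x * u t x + 1 / c * u t x ^ 2
              = (c * yxxx t x - u t x) ^ 2 / c := by
            field_simp
            ring
          rw [this]
          positivity
        nlinarith [mul_nonneg hc.le (sq_nonneg (yxxx t x))]
    _ = 1 / c * ∫ x in a..b, u t x ^ 2 := by
        rw [intervalIntegral.integral_add i1 i2, intervalIntegral.integral_const_mul,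
          intervalIntegral.integral_const_mul, hzero]
        ring

/-- The energy inequality: `∫ (∂ₓy(t))² ≤ ∫ (∂ₓy(0))² + c⁻¹ ∫∫ u²`. -/
lemma IsClassicalSolution.integral_yx_sq_le (hab : a ≤ b) (hlam : 0 < lam) (hβ : 1 < β)
    (h : IsClassicalSolution a b T lam ε β y yx yxx yxxx yxxxx yt u ux)
    {yxt : ℝ → ℝ → ℝ}
    (hyxt : ∀ t ∈ Icc (0 : ℝ) T, ∀ x ∈ Icc a b,
      HasDerivAt (fun s => yx s x) (yxt t x) t)
    (hyxt_cont : ContinuousOn (fun p : ℝ × ℝ => yxt p.1 p.2) (Icc 0 T ×ˢ Icc a b))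
    (hmixed : ∀ t ∈ Icc (0 : ℝ) T, ∀ x ∈ Icc a b,
      HasDerivAt (fun ξ => yt t ξ) (yxt t x) x)
    {C₀ : ℝ} (hC₀ : 0 < C₀) (hc : 0 < lam * C₀ ^ β + ε)
    (hlower : ∀ t ∈ Icc (0 : ℝ) T, ∀ x ∈ Icc a b, C₀ ≤ y t x)
    {t : ℝ} (ht : t ∈ Icc 0 T) :
    ∫ x in a..b, yx t x ^ 2 ≤ (∫ x in a..b, yx 0 x ^ 2) +
      (1 / (lam * C₀ ^ β + ε)) * ∫ s in (0 : ℝ)..T, ∫ x in a..b, u s x ^ 2 := by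
  have hcont : ContinuousOn (fun p : ℝ × ℝ => 2 * yx p.1 p.2 * yxt p.1 p.2)
      (Icc 0 T ×ˢ Icc a b) := (continuousOn_const.mul h.cont_yx).mul hyxt_cont
  have hu2 : ContinuousOn (fun p : ℝ × ℝ => u p.1 p.2 ^ 2) (Icc 0 T ×ˢ Icc a b) := h.cont_u.pow 2
  have key := integral_sub_eq_integral_integral_deriv hab
    (F := fun s x => yx s x ^ 2) (F' := fun s x => 2 * yx s x * yxt s x) (h.cont_yx.pow 2) hcont
    (fun s hs x hx => by simpa using (hyxt s hs x hx).fun_pow 2) ht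
  have hint := intervalIntegrable_integral_of_continuousOn hab (F := fun s x => u s x ^ 2) hu2
    le_rfl ht.1 ht.2
  have hle : ∫ s in (0 : ℝ)..t, ∫ x in a..b, 2 * yx s x * yxt s x ≤
      ∫ s in (0 : ℝ)..t, 1 / (lam * C₀ ^ β + ε) * ∫ x in a..b, u s x ^ 2 :=
    intervalIntegral.integral_mono_on ht.1
      (intervalIntegrable_integral_of_continuousOn hab (F := fun s x => 2 * yx s x * yxt s x)
        hcont le_rfl ht.1 ht.2)
      (hint.const_mul _)
      fun s hs => h.integral_yx_mul_yxt_le hab hlam hβ hyxt_cont hmixed hC₀ hc hlower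
        ⟨hs.1, hs.2.trans ht.2⟩
  rw [intervalIntegral.integral_const_mul] at hle
  have hmono : ∫ s in (0 : ℝ)..t, ∫ x in a..b, u s x ^ 2 ≤
      ∫ s in (0 : ℝ)..T, ∫ x in a..b, u s x ^ 2 :=
    intervalIntegral.integral_mono_interval le_rfl ht.1 ht.2
      (.of_forall fun s => intervalIntegral.integral_nonneg hab fun x _ => sq_nonneg _)
      (intervalIntegrable_integral_of_continuousOn hab (F := fun s x => u s x ^ 2) hu2
        le_rfl (ht.1.trans ht.2) le_rfl)
  have := mul_le_mul_of_nonneg_left hmono (one_div_pos.2 hc).le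
  linarith

end

/-- Uniform `L^∞` bound for classical solutions: combining mass conservation with
the `1/2`-Hölder bound in space yields
`y(t,x) ≤ (b−a)⁻¹·∫ₐᵇ y(0,ξ) dξ + H·(b−a)^{1/2}`, where
`H = (‖∂ₓy(0)‖² + (1/c)∫₀ᵀ‖u‖²)^{1/2}` and `c = λC₀^β + ε`. -/
theorem thinFilm_uniform_upper_bound
    (a b T lam ε β C₀ : ℝ) (hab : a < b) (hT : 0 < T) (hlam : 0 < lam)
    (hε : 0 ≤ ε) (hβ : 1 < β) (hC₀ : 0 < C₀)
    (y yx yxx yxxx yxxxx yt u ux yxt : ℝ → ℝ → ℝ)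
    (hsol : IsClassicalSolution a b T lam ε β y yx yxx yxxx yxxxx yt u ux)
    (hlower : ∀ t ∈ Icc (0 : ℝ) T, ∀ x ∈ Icc a b, C₀ ≤ y t x)
    (hyxt : ∀ t ∈ Icc (0 : ℝ) T, ∀ x ∈ Icc a b,
      HasDerivAt (fun s => yx s x) (yxt t x) t)
    (hyxt_cont : ContinuousOn (fun p : ℝ × ℝ => yxt p.1 p.2) (Icc 0 T ×ˢ Icc a b))
    (hmixed : ∀ t ∈ Icc (0 : ℝ) T, ∀ x ∈ Icc a b,
      HasDerivAt (fun ξ => yt t ξ) (yxt t x) x) :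
    ∀ t ∈ Icc (0 : ℝ) T, ∀ x ∈ Icc a b,
      y t x ≤ (b - a)⁻¹ * (∫ ξ in a..b, y 0 ξ)
        + ((∫ x' in a..b, (yx 0 x') ^ 2)
            + (1 / (lam * C₀ ^ β + ε)) * (∫ s in (0 : ℝ)..T, ∫ x' in a..b, (u s x') ^ 2)) ^ ((1 : ℝ) / 2)
          * (b - a) ^ ((1 : ℝ) / 2) := by
  intro t ht x hx
  have hL : 0 < b - a := sub_pos.2 hab
  have hc : 0 < lam * C₀ ^ β + ε := by positivity
  have hE := hsol.integral_yx_sq_le hab.le hlam hβ hyxt hyxt_cont hmixed hC₀ hc hlower ht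
  set K := (∫ x' in a..b, (yx 0 x') ^ 2)
    + (1 / (lam * C₀ ^ β + ε)) * (∫ s in (0 : ℝ)..T, ∫ x' in a..b, (u s x') ^ 2)
  set R := K ^ ((1 : ℝ) / 2) * (b - a) ^ ((1 : ℝ) / 2)
  have hpt : ∀ ξ ∈ Icc a b, y t x - R ≤ y t ξ := fun ξ hξ => by
    have := sub_le_rpow_mul_rpow hab (hsol.hyx t ht) (continuousOn_slice hsol.cont_yx ht) hE hx hξ
    linarith
  have hint := intervalIntegral.integral_mono_on hab.le (μ := volume)
    (by simp) ((continuousOn_slice hsol.cont_y ht).intervalIntegrable_of_Icc hab.le) hpt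
  rw [intervalIntegral.integral_const, smul_eq_mul, hsol.mass_conservation hab.le ht] at hint
  have := (le_inv_mul_iff₀ hL).2 hint
  linarith
end

section
/- Let a < b, T > 0, λ > 0 and β > 2 be reals, and let y be a classical solution of the regularized thin-film equation with control u ≡ 0 and ε = 0 on [0,T] × [a,b] such that y(t,x) > 0 for all (t,x) ∈ [0,T] × [a,b]. Define the entropy H(t) = (1/((β−1)(β−2)))·∫ₐᵇ y(t,x)^{2−β} dx. Then H is differentiable on [0,T] with H'(t) = −λ·∫ₐᵇ (∂ₓ²y(t,x))² dx for every t ∈ [0,T]; in particular H is non-increasing on [0,T]. -/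
/-!
The time derivative may be taken inside the integral, because on the compact rectangle the
integrand `y ^ (2 - β)` has a continuous, hence bounded, time derivative
(`hasDerivWithinAt_integral_of_continuousOn`). The resulting integral is evaluated by integrating
by parts twice in space (`integral_rpow_mul_yt`): the first integration moves the derivative from
the flux `λ y ^ β ∂ₓ³y`, which vanishes at the endpoints, onto `y ^ (1 - β)`, and the powers of `y`
cancel, leaving `∂ₓy ∂ₓ³y`; the second uses `∂ₓy = 0` at the endpoints and gives `-(∂ₓ²y)²`.
Monotonicity follows since the derivative of the entropy is nonpositive.
-/

open Set

/-- Differentiation under the integral sign on a compact rectangle, including the one-sided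
derivatives at the ends of the time interval. The difference quotients are dominated by the
supremum of `|f'|`, by the mean value inequality. -/
theorem hasDerivWithinAt_integral_of_continuousOn {a b c d : ℝ} (hab : a ≤ b) {f f' : ℝ → ℝ → ℝ}
    (hf : ∀ s ∈ Icc c d, ContinuousOn (f s) (Icc a b))
    (hf' : ContinuousOn (fun p : ℝ × ℝ => f' p.1 p.2) (Icc c d ×ˢ Icc a b))
    (hd : ∀ s ∈ Icc c d, ∀ x ∈ Icc a b,
      HasDerivWithinAt (fun r => f r x) (f' s x) (Icc c d) s)
    {t : ℝ} (ht : t ∈ Icc c d) :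
    HasDerivWithinAt (fun s => ∫ x in a..b, f s x) (∫ x in a..b, f' t x) (Icc c d) t := by
  obtain ⟨C, hC⟩ := (isCompact_Icc.prod isCompact_Icc).exists_bound_of_continuousOn hf'
  have hint : ∀ s ∈ Icc c d, IntervalIntegrable (f s) MeasureTheory.volume a b := fun s hs =>
    ContinuousOn.intervalIntegrable (by rw [uIcc_of_le hab]; exact hf s hs)
  have hsub : uIoc a b ⊆ Icc a b := by rw [uIoc_of_le hab]; exact Ioc_subset_Icc_self
  have hmem : ∀ᶠ s in nhdsWithin t (Icc c d \ {t}), s ∈ Icc c d \ {t} := self_mem_nhdsWithin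
  rw [hasDerivWithinAt_iff_tendsto_slope]
  have key : Filter.Tendsto (fun s => ∫ x in a..b, slope (fun r => f r x) t s)
      (nhdsWithin t (Icc c d \ {t})) (nhds (∫ x in a..b, f' t x)) := by
    refine intervalIntegral.tendsto_integral_filter_of_dominated_convergence (fun _ => C) ?_ ?_
      intervalIntegrable_const ?_
    · filter_upwards [hmem] with s hs
      simp only [slope_def_field]
      exact ((((hf s hs.1).sub (hf t ht)).div_const _).mono hsub).aestronglyMeasurable
        measurableSet_uIoc
    · filter_upwards [hmem] with s hs
      refine Filter.Eventually.of_forall fun x hx => ?_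
      have h := (convex_Icc c d).norm_image_sub_le_of_norm_hasDerivWithin_le
        (fun r hr => hd r hr x (hsub hx)) (fun r hr => hC (r, x) ⟨hr, hsub hx⟩) ht hs.1
      rw [slope_def_field, norm_div]
      exact (div_le_iff₀ (norm_pos_iff.2 (sub_ne_zero.2 hs.2))).2 h
    · refine Filter.Eventually.of_forall fun x hx => ?_
      exact hasDerivWithinAt_iff_tendsto_slope.1 (hd t ht x (hsub hx))
  refine key.congr' ?_
  filter_upwards [hmem] with s hs
  simp only [slope_def_field]
  rw [intervalIntegral.integral_div, intervalIntegral.integral_sub (hint s hs.1) (hint t ht)]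

/-- The spatial part of the dissipation identity: testing the equation with `y ^ (1 - β)` and
integrating by parts twice. -/
theorem integral_rpow_mul_yt {a b T lam β : ℝ} (hab : a ≤ b)
    {y yx yxx yxxx yxxxx yt : ℝ → ℝ → ℝ}
    (hsol : IsClassicalSolution a b T lam 0 β y yx yxx yxxx yxxxx yt
      (fun _ _ => 0) (fun _ _ => 0))
    (hpos : ∀ t ∈ Icc (0 : ℝ) T, ∀ x ∈ Icc a b, 0 < y t x) {t : ℝ} (ht : t ∈ Icc 0 T) :
    ∫ x in a..b, y t x ^ (1 - β) * yt t x =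
      (β - 1) * (lam * ∫ x in a..b, yxx t x ^ 2) := by
  have hI : uIcc a b = Icc a b := uIcc_of_le hab
  have slice : ∀ {g : ℝ → ℝ → ℝ},
      ContinuousOn (fun p : ℝ × ℝ => g p.1 p.2) (Icc 0 T ×ˢ Icc a b) →
      ContinuousOn (g t) (uIcc a b) := fun {g} hg => by
    rw [hI]
    exact hg.comp (f := fun x => (t, x)) (by fun_prop) (fun x hx => ⟨ht, hx⟩)
  have hne : ∀ x ∈ uIcc a b, y t x ≠ 0 := fun x hx => (hpos t ht x (hI ▸ hx)).ne'
  have hpow : ∀ x ∈ uIcc a b,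
      HasDerivAt (fun ξ => y t ξ ^ (1 - β)) (yx t x * (1 - β) * y t x ^ (1 - β - 1)) x :=
    fun x hx => (hsol.hyx t ht x (hI ▸ hx)).rpow_const (Or.inl (hne x hx))
  have ibp₁ := intervalIntegral.integral_mul_deriv_eq_deriv_mul hpow
    (fun x hx => hsol.pde t ht x (hI ▸ hx))
    (((slice hsol.cont_yx).mul continuousOn_const).mul
      ((slice hsol.cont_y).rpow_const fun x hx => Or.inl (hne x hx))).intervalIntegrable
    (continuousOn_const.sub (slice hsol.cont_yt)).intervalIntegrable
  have ibp₂ := intervalIntegral.integral_mul_deriv_eq_deriv_mul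
    (fun x hx => hsol.hyxx t ht x (hI ▸ hx)) (fun x hx => hsol.hyxxx t ht x (hI ▸ hx))
    (slice hsol.cont_yxx).intervalIntegrable (slice hsol.cont_yxxx).intervalIntegrable
  -- The power `y ^ (-β)` from the chain rule cancels the mobility `y ^ β`.
  have cancel : ∫ x in a..b, yx t x * (1 - β) * y t x ^ (1 - β - 1) *
        ((lam * |y t x| ^ β + 0) * yxxx t x) =
      ∫ x in a..b, (1 - β) * lam * (yx t x * yxxx t x) := by
    refine intervalIntegral.integral_congr fun x hx => ?_
    have hy := hpos t ht x (hI ▸ hx)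
    have h1 : y t x ^ (1 - β - 1) * y t x ^ β = 1 := by
      rw [← Real.rpow_add hy, show 1 - β - 1 + β = 0 by ring, Real.rpow_zero]
    simp only [abs_of_pos hy]
    linear_combination (1 - β) * lam * yx t x * yxxx t x * h1
  rw [cancel, intervalIntegral.integral_const_mul, ibp₂] at ibp₁
  simp only [hsol.bc_yx_a t ht, hsol.bc_yx_b t ht, hsol.bc_yxxx_a t ht, hsol.bc_yxxx_b t ht,
    zero_sub, mul_neg, intervalIntegral.integral_neg, mul_zero, zero_mul] at ibp₁
  simp only [pow_two]
  linear_combination -ibp₁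

/-- Entropy dissipation identity (key computation in the proof of Lemma 2.7):
along a positive classical solution of the thin-film equation with `u ≡ 0` and
`ε = 0`, the entropy `H(t) = (1/((β−1)(β−2)))·∫ₐᵇ y(t,x)^{2−β} dx` is
differentiable on `[0,T]` with `H'(t) = −λ·∫ₐᵇ (∂ₓ²y(t,x))² dx`; in particular
`H` is non-increasing on `[0,T]`. -/
theorem thinFilm_entropy_dissipation
    (a b T lam β : ℝ) (hab : a < b) (hT : 0 < T) (hlam : 0 < lam) (hβ : 2 < β)
    (y yx yxx yxxx yxxxx yt : ℝ → ℝ → ℝ)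
    (hsol : IsClassicalSolution a b T lam 0 β y yx yxx yxxx yxxxx yt
      (fun _ _ => 0) (fun _ _ => 0))
    (hpos : ∀ t ∈ Icc (0 : ℝ) T, ∀ x ∈ Icc a b, 0 < y t x) :
    (∀ t ∈ Icc (0 : ℝ) T,
      HasDerivWithinAt
        (fun s => (1 / ((β - 1) * (β - 2))) * ∫ x in a..b, y s x ^ (2 - β))
        (-(lam * ∫ x in a..b, (yxx t x) ^ 2)) (Icc 0 T) t) ∧
    AntitoneOn
      (fun s => (1 / ((β - 1) * (β - 2))) * ∫ x in a..b, y s x ^ (2 - β))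
      (Icc 0 T) := by
  have hder : ∀ t ∈ Icc (0 : ℝ) T,
      HasDerivWithinAt
        (fun s => (1 / ((β - 1) * (β - 2))) * ∫ x in a..b, y s x ^ (2 - β))
        (-(lam * ∫ x in a..b, (yxx t x) ^ 2)) (Icc 0 T) t := by
    intro t ht
    have h := hasDerivWithinAt_integral_of_continuousOn hab.le
      (f := fun s x => y s x ^ (2 - β))
      (f' := fun s x => (2 - β) * (y s x ^ (1 - β) * yt s x)) (c := 0) (d := T)
      (fun s hs => (hsol.cont_y.comp (f := fun x => (s, x)) (by fun_prop)
        (fun x hx => ⟨hs, hx⟩)).rpow_const fun x hx => Or.inl (hpos s hs x hx).ne')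
      (continuousOn_const.mul ((hsol.cont_y.rpow_const
        fun p hp => Or.inl (hpos p.1 hp.1 p.2 hp.2).ne').mul hsol.cont_yt))
      (fun s hs x hx => by
        have := (hsol.hyt s hs x hx).rpow_const (p := 2 - β) (Or.inl (hpos s hs x hx).ne')
        refine (this.congr_deriv ?_).hasDerivWithinAt
        rw [show 2 - β - 1 = 1 - β by ring]
        ring) ht
    refine (h.const_mul (1 / ((β - 1) * (β - 2)))).congr_deriv ?_
    rw [intervalIntegral.integral_const_mul, integral_rpow_mul_yt hab.le hsol hpos ht]
    have h1 : β - 1 ≠ 0 := by linarith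
    have h2 : β - 2 ≠ 0 := by linarith
    field_simp
    ring
  refine ⟨hder, antitoneOn_of_hasDerivWithinAt_nonpos (convex_Icc 0 T)
    (fun t ht => (hder t ht).continuousWithinAt)
    (fun t ht => (hder t (interior_subset ht)).mono interior_subset) fun t _ => ?_⟩
  exact neg_nonpos.2 (mul_nonneg hlam.le
    (intervalIntegral.integral_nonneg hab.le fun x _ => sq_nonneg _))
end

section
/- Let a < b and x̂ ∈ [a,b] be reals, let β ≥ 4 and H > 0 be reals, and let y : ℝ → ℝ be continuous on [a,b] with y(x̂) = 0, y(x) > 0 for all x ∈ [a,b] with x ≠ x̂, and y(x) ≤ H·|x − x̂|^{1/2} for all x ∈ [a,b]. Then the function x ↦ y(x)^{2−β} (real power) is not Lebesgue-integrable on [a,b]. -/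
/-!
Since `2 - β ≤ -2`, raising the Hölder bound to the power `2 - β` reverses it and gives
`y x ^ (2 - β) ≥ H ^ (2 - β) * |x - xhat| ^ ((2 - β) / 2)` with exponent `(2 - β) / 2 ≤ -1`.
On the bounded interval `[a, b]` the right-hand side dominates a positive multiple of
`|x - xhat|⁻¹` (`inv_abs_le_entropy_density`). Integrability of the entropy density would thus make
`(x - xhat)⁻¹` integrable on an interval containing `xhat`, which its logarithmic divergence forbids.
-/

open Set MeasureTheory

/-- Pointwise comparison of the singularity `r⁻¹` with the entropy density `t ^ (2 - β)` of a height
`t ≤ H * r ^ (1 / 2)`. The bound `r ≤ L` on the distance to the touchdown point absorbs the surplus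
power `r ^ ((β - 4) / 2)` into the constant. -/
lemma inv_abs_le_entropy_density {β H L r t : ℝ} (hβ : 4 ≤ β) (hH : 0 < H) (hr : 0 < r)
    (hrL : r ≤ L) (ht : 0 < t) (hle : t ≤ H * r ^ ((1 : ℝ) / 2)) :
    r⁻¹ ≤ H ^ (β - 2) * L ^ ((β - 4) / 2) * t ^ (2 - β) := by
  have hpow : H ^ (2 - β) * r ^ ((2 - β) / 2) ≤ t ^ (2 - β) := by
    have h := Real.rpow_le_rpow_of_nonpos ht hle (by linarith : 2 - β ≤ 0)
    rw [Real.mul_rpow hH.le (by positivity), ← Real.rpow_mul hr.le] at h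
    convert h using 3
    ring
  have hsurplus : r ^ ((β - 4) / 2) ≤ L ^ ((β - 4) / 2) :=
    Real.rpow_le_rpow hr.le hrL (by linarith)
  have hHH : H ^ (β - 2) * H ^ (2 - β) = 1 := by
    rw [← Real.rpow_add hH]
    simp
  have hrr : r ^ ((β - 4) / 2) * r ^ ((2 - β) / 2) = r⁻¹ := by
    rw [← Real.rpow_add hr, ← Real.rpow_neg_one]
    congr 1
    ring
  have hL : 0 < L := hr.trans_le hrL
  calc r⁻¹ = (H ^ (β - 2) * H ^ (2 - β)) * (r ^ ((β - 4) / 2) * r ^ ((2 - β) / 2)) := by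
        rw [hHH, hrr, one_mul]
    _ = H ^ (β - 2) * r ^ ((β - 4) / 2) * (H ^ (2 - β) * r ^ ((2 - β) / 2)) := by ring
    _ ≤ H ^ (β - 2) * L ^ ((β - 4) / 2) * t ^ (2 - β) := by gcongr

/-- Entropy blow-up at a touchdown point (core analytic step of Lemma 2.7): if a
function that is continuous on `[a,b]`, positive away from `x̂`, vanishes at `x̂`,
and satisfies the Hölder bound `y(x) ≤ H·|x − x̂|^{1/2}`, then for `β ≥ 4` the
entropy density `y^{2−β}` is not Lebesgue-integrable on `[a,b]`. -/
theorem entropy_blowup_at_touchdown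
    (a b xhat β H : ℝ) (hab : a < b) (hxhat : xhat ∈ Icc a b)
    (hβ : 4 ≤ β) (hH : 0 < H) (y : ℝ → ℝ)
    (hcont : ContinuousOn y (Icc a b))
    (hzero : y xhat = 0)
    (hpos : ∀ x ∈ Icc a b, x ≠ xhat → 0 < y x)
    (hholder : ∀ x ∈ Icc a b, y x ≤ H * |x - xhat| ^ ((1 : ℝ) / 2)) :
    ¬ IntegrableOn (fun x => y x ^ (2 - β)) (Icc a b) := by
  intro hint
  have hinv : IntegrableOn (fun x => (x - xhat)⁻¹) (Icc a b) := by
    refine Integrable.mono' (hint.const_mul (H ^ (β - 2) * (b - a) ^ ((β - 4) / 2)))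
      (by fun_prop) ?_
    filter_upwards [ae_restrict_mem measurableSet_Icc] with x hx
    rw [norm_inv, Real.norm_eq_abs]
    rcases eq_or_ne x xhat with rfl | hne
    -- At the touchdown point itself both sides take the conventional value `0`.
    · rw [hzero, Real.zero_rpow (by linarith)]
      simp
    · refine inv_abs_le_entropy_density hβ hH (abs_pos.2 (sub_ne_zero.2 hne)) ?_
        (hpos x hx hne) (hholder x hx)
      rw [abs_le]
      constructor <;> linarith [hx.1, hx.2, hxhat.1, hxhat.2]
  rw [← intervalIntegrable_iff_integrableOn_Icc_of_le hab.le, intervalIntegrable_sub_inv_iff] at hinv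
  rcases hinv with h | h
  · exact hab.ne h
  · exact h (by rwa [uIcc_of_le hab.le])
end

section
/- Let K be a nonempty compact topological space, let β > 1 and C₀ > 0 be reals, and let y ∈ C(K,ℝ) satisfy y(x) ≥ C₀ for all x ∈ K. Then the superposition map Φ : C(K,ℝ) → C(K,ℝ) defined by Φ(z)(x) = |z(x)|^β is Fréchet differentiable at y, with derivative the continuous linear map h ↦ (x ↦ β·y(x)^{β−1}·h(x)). -/
/-!
The pointwise nonlinearity `t ↦ |t|^β` agrees with `t ↦ t^β` on `(0, ∞)`, where it has the continuous
derivative `t ↦ β t^(β-1)`. The range of `y` is a compact subset of `(0, ∞)`, so this derivative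
is uniformly continuous near it (`IsCompact.uniformContinuousAt_of_continuousAt`): for `ε > 0` there
is one `δ > 0` with `|β s^(β-1) - β y(x)^(β-1)| ≤ ε` whenever `|s - y(x)| < δ`, for all `x`. The mean
value inequality on the interval of radius `δ` about `y(x)` turns this into a remainder of size at
most `ε |h(x)|`, uniformly in `x`, which is Fréchet differentiability for the supremum norm.
-/

open ContinuousMap

/-- The superposition map `z ↦ |z|^β` on `C(K,ℝ)`. -/
noncomputable def absRpowMap {K : Type*} [TopologicalSpace K] (β : ℝ) (hβ : 1 < β)
    (z : C(K, ℝ)) : C(K, ℝ) :=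
  ⟨fun x => |z x| ^ β,
    (continuous_abs.comp z.continuous).rpow_const fun _ => Or.inr (le_of_lt (lt_trans one_pos hβ))⟩

/-- The candidate Fréchet derivative at `y`: the continuous linear map
`h ↦ (x ↦ β·y(x)^{β−1}·h(x))`, i.e. multiplication by `β·y^{β−1}`. -/
noncomputable def absRpowDeriv {K : Type*} [TopologicalSpace K] [CompactSpace K]
    (β C₀ : ℝ) (hβ : 1 < β) (hC₀ : 0 < C₀) (y : C(K, ℝ)) (hy : ∀ x : K, C₀ ≤ y x) :
    C(K, ℝ) →L[ℝ] C(K, ℝ) :=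
  ContinuousLinearMap.mul ℝ C(K, ℝ)
    ⟨fun x => β * y x ^ (β - 1),
      continuous_const.mul
        (y.continuous.rpow_const fun x =>
          Or.inl (ne_of_gt (lt_of_lt_of_le hC₀ (hy x))))⟩

/-- First-order Taylor remainder bound for `|·|^β`: an oscillation bound for the derivative on an
interval of positive numbers controls the error of the linearization at its centre. -/
theorem abs_rpow_remainder_le {β a b ε δ : ℝ} (hδa : δ ≤ a) (hδ : 0 < δ)
    (hosc : ∀ s, |s - a| < δ → |β * s ^ (β - 1) - β * a ^ (β - 1)| ≤ ε) (hb : |b - a| < δ) :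
    |(|b| ^ β - |a| ^ β - β * a ^ (β - 1) * (b - a))| ≤ ε * |b - a| := by
  have hpos : ∀ s, |s - a| < δ → 0 < s := fun s hs => by
    have := (abs_lt.1 hs).1
    linarith
  have ha : |a - a| < δ := by simpa using hδ
  -- Subtracting the linear part reduces the claim to the mean value inequality.
  have hmv := Convex.norm_image_sub_le_of_norm_hasDerivWithin_le
    (f := fun s : ℝ => s ^ β - β * a ^ (β - 1) * s)
    (f' := fun s : ℝ => β * s ^ (β - 1) - β * a ^ (β - 1)) (s := Metric.ball a δ) (C := ε)
    (x := a) (y := b)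
    (fun s hs => by
      rw [Metric.mem_ball, Real.dist_eq] at hs
      have h := (Real.hasDerivAt_rpow_const (p := β) (Or.inl (hpos s hs).ne')).sub
        ((hasDerivAt_id s).const_mul (β * a ^ (β - 1)))
      rw [mul_one] at h
      exact h.hasDerivWithinAt)
    (fun s hs => hosc s (by rwa [Metric.mem_ball, Real.dist_eq] at hs))
    (convex_ball a δ) (Metric.mem_ball_self hδ) (by rwa [Metric.mem_ball, Real.dist_eq])
  rw [abs_of_pos (hpos a ha), abs_of_pos (hpos b hb)]
  rw [Real.norm_eq_abs, Real.norm_eq_abs] at hmv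
  convert hmv using 2
  ring

/-- On a compact space, `t ↦ β t^(β-1)` is continuous near the compact range of `y`, hence its
oscillation there is small uniformly in the base point. -/
theorem exists_uniform_oscillation {K : Type*} [TopologicalSpace K] [CompactSpace K]
    (β : ℝ) (y : C(K, ℝ)) (hy : ∀ x, 0 < y x) {ε : ℝ} (hε : 0 < ε) :
    ∃ δ > 0, ∀ x s, |s - y x| < δ → |β * s ^ (β - 1) - β * y x ^ (β - 1)| ≤ ε := by
  have h := (isCompact_range y.continuous).uniformContinuousAt_of_continuousAt
    (fun s : ℝ => β * s ^ (β - 1))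
    (by
      rintro _ ⟨x, rfl⟩
      exact continuousAt_const.mul (Real.continuousAt_rpow_const _ _ (Or.inl (hy x).ne')))
    (Metric.dist_mem_uniformity hε)
  obtain ⟨δ, hδ, H⟩ := Metric.mem_uniformity_dist.1 h
  refine ⟨δ, hδ, fun x s hs => ?_⟩
  have h1 : dist (y x) s < δ := by rwa [dist_comm, Real.dist_eq]
  have h2 : dist (β * y x ^ (β - 1)) (β * s ^ (β - 1)) < ε := H h1 ⟨x, rfl⟩
  rw [dist_comm, Real.dist_eq] at h2
  exact h2.le

/-- Lemma 3.4, underlying differentiability of the nonlinearity: for `β > 1` and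
a state `y ∈ C(K,ℝ)` bounded below by `C₀ > 0`, the superposition map
`z ↦ |z|^β` on `C(K,ℝ)` is Fréchet differentiable at `y`, with derivative
`h ↦ (x ↦ β·y(x)^{β−1}·h(x))`. -/
theorem absRpow_hasFDerivAt
    {K : Type*} [TopologicalSpace K] [CompactSpace K] [Nonempty K]
    (β C₀ : ℝ) (hβ : 1 < β) (hC₀ : 0 < C₀)
    (y : C(K, ℝ)) (hy : ∀ x : K, C₀ ≤ y x) :
    HasFDerivAt (absRpowMap β hβ) (absRpowDeriv β C₀ hβ hC₀ y hy) y := by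
  rw [hasFDerivAt_iff_isLittleO, Asymptotics.isLittleO_iff]
  intro ε hε
  obtain ⟨δ, hδ, hosc⟩ := exists_uniform_oscillation β y (fun x => hC₀.trans_le (hy x)) hε
  -- Radius at most `C₀` keeps the perturbed states positive.
  filter_upwards [Metric.ball_mem_nhds y (lt_min hδ hC₀)] with z hz
  rw [Metric.mem_ball, dist_eq_norm] at hz
  rw [ContinuousMap.norm_le _ (by positivity)]
  intro x
  have hzx : |z x - y x| ≤ ‖z - y‖ := (z - y).norm_coe_le_norm x
  have hrem := abs_rpow_remainder_le (β := β) (ε := ε) (a := y x) (b := z x)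
    ((min_le_right δ C₀).trans (hy x)) (lt_min hδ hC₀)
    (fun s hs => hosc x s (hs.trans_le (min_le_left _ _))) (hzx.trans_lt hz)
  exact hrem.trans (mul_le_mul_of_nonneg_left hzx hε.le)
end
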